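/- Vortex solutions are minimizing and stable solutions of the Yang–Mills–Higgs equations: if a periodic configuration (u, A) satisfies the vortex equations or the anti-vortex equations, then (u, A) satisfies the YMH equations, E_ε(u, A) = 0, E_ε(u, A) ≤ E_ε(w, B) for every periodic configuration (w, B), and (u, A) is stable. -/

import Mathlib

open MeasureTheory Complex

noncomputable section

/-- Partial derivative in the first coordinate direction. -/
def pd1 {E : Type*} [NormedAddCommGroup E] [NormedSpace ℝ E] (f : ℝ × ℝ → E) (x : ℝ × ℝ) : E :=
  fderiv ℝ f x (1, 0)

/-- Partial derivative in the second coordinate direction. -/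
def pd2 {E : Type*} [NormedAddCommGroup E] [NormedSpace ℝ E] (f : ℝ × ℝ → E) (x : ℝ × ℝ) : E :=
  fderiv ℝ f x (0, 1)

/-- First covariant derivative `D₁f = ∂₁f − iA₁f`. -/
def D1 (A1 : ℝ × ℝ → ℝ) (f : ℝ × ℝ → ℂ) (x : ℝ × ℝ) : ℂ :=
  pd1 f x - Complex.I * (A1 x) * f x

/-- Second covariant derivative `D₂f = ∂₂f − iA₂f`. -/
def D2 (A2 : ℝ × ℝ → ℝ) (f : ℝ × ℝ → ℂ) (x : ℝ × ℝ) : ℂ :=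
  pd2 f x - Complex.I * (A2 x) * f x

/-- Curvature function `F = ∂₁A₂ − ∂₂A₁`. -/
def curv (A1 A2 : ℝ × ℝ → ℝ) (x : ℝ × ℝ) : ℝ := pd1 A2 x - pd2 A1 x

/-- `h = (1 − |u|²)/(2ε²)`. -/
def hfun (ε : ℝ) (u : ℝ × ℝ → ℂ) (x : ℝ × ℝ) : ℝ := (1 - ‖u x‖ ^ 2) / (2 * ε ^ 2)

/-- `σ₊ = D₁u + iD₂u`. -/
def sigP (u : ℝ × ℝ → ℂ) (A1 A2 : ℝ × ℝ → ℝ) (x : ℝ × ℝ) : ℂ :=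
  D1 A1 u x + Complex.I * D2 A2 u x

/-- `σ₋ = D₁u − iD₂u`. -/
def sigM (u : ℝ × ℝ → ℂ) (A1 A2 : ℝ × ℝ → ℝ) (x : ℝ × ℝ) : ℂ :=
  D1 A1 u x - Complex.I * D2 A2 u x

/-- The Yang--Mills--Higgs energy over the fundamental domain `[0,1]²`. -/
def energy (ε : ℝ) (u : ℝ × ℝ → ℂ) (A1 A2 : ℝ × ℝ → ℝ) : ℝ :=
  ∫ x in Set.Icc (0:ℝ) 1 ×ˢ Set.Icc (0:ℝ) 1,
    (ε ^ 2 * curv A1 A2 x ^ 2 + ‖D1 A1 u x‖ ^ 2 + ‖D2 A2 u x‖ ^ 2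
      + (1 - ‖u x‖ ^ 2) ^ 2 / (4 * ε ^ 2))

/-- `ℤ²`-periodicity. -/
def Periodic2 {E : Type*} (f : ℝ × ℝ → E) : Prop :=
  ∀ x : ℝ × ℝ, f (x.1 + 1, x.2) = f x ∧ f (x.1, x.2 + 1) = f x

/-- The Yang--Mills--Higgs equations on all of `ℝ²`. -/
def IsYMH (ε : ℝ) (u : ℝ × ℝ → ℂ) (A1 A2 : ℝ × ℝ → ℝ) : Prop :=
  (∀ x, -(D1 A1 (D1 A1 u) x + D2 A2 (D2 A2 u) x) = (hfun ε u x : ℂ) * u x) ∧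
  (∀ x, ε ^ 2 * pd2 (curv A1 A2) x = ((starRingEnd ℂ) (u x) * D1 A1 u x).im) ∧
  (∀ x, ε ^ 2 * pd1 (curv A1 A2) x = -((starRingEnd ℂ) (u x) * D2 A2 u x).im)

/-- The Yang--Mills--Higgs equations on an open set `U ⊆ ℝ²`. -/
def IsYMHOn (ε : ℝ) (u : ℝ × ℝ → ℂ) (A1 A2 : ℝ × ℝ → ℝ) (U : Set (ℝ × ℝ)) : Prop :=
  (∀ x ∈ U, -(D1 A1 (D1 A1 u) x + D2 A2 (D2 A2 u) x) = (hfun ε u x : ℂ) * u x) ∧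
  (∀ x ∈ U, ε ^ 2 * pd2 (curv A1 A2) x = ((starRingEnd ℂ) (u x) * D1 A1 u x).im) ∧
  (∀ x ∈ U, ε ^ 2 * pd1 (curv A1 A2) x = -((starRingEnd ℂ) (u x) * D2 A2 u x).im)

/-- Stability: nonnegative second variation of the energy along all smooth periodic
variations of the section and the connection. -/
def Stable (ε : ℝ) (u : ℝ × ℝ → ℂ) (A1 A2 : ℝ × ℝ → ℝ) : Prop :=
  ∀ v : ℝ × ℝ → ℂ, ∀ a1 a2 : ℝ × ℝ → ℝ,
    ContDiff ℝ (⊤ : ℕ∞) v → Periodic2 v → ContDiff ℝ (⊤ : ℕ∞) a1 → Periodic2 a1 →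
    ContDiff ℝ (⊤ : ℕ∞) a2 → Periodic2 a2 →
    0 ≤ iteratedDeriv 2 (fun t : ℝ =>
      energy ε (fun x => u x + t • v x)
        (fun x => A1 x + t * a1 x) (fun x => A2 x + t * a2 x)) 0

lemma pd1_contDiff {E : Type*} [NormedAddCommGroup E] [NormedSpace ℝ E] {f : ℝ × ℝ → E}
    (hf : ContDiff ℝ (⊤ : ℕ∞) f) : ContDiff ℝ (⊤ : ℕ∞) (pd1 f) := by
  unfold pd1
  exact (hf.fderiv_right (m := (⊤ : ℕ∞)) (by simp)).clm_apply contDiff_const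

lemma pd2_contDiff {E : Type*} [NormedAddCommGroup E] [NormedSpace ℝ E] {f : ℝ × ℝ → E}
    (hf : ContDiff ℝ (⊤ : ℕ∞) f) : ContDiff ℝ (⊤ : ℕ∞) (pd2 f) := by
  unfold pd2
  exact (hf.fderiv_right (m := (⊤ : ℕ∞)) (by simp)).clm_apply contDiff_const

lemma fderiv_periodic {E : Type*} [NormedAddCommGroup E] [NormedSpace ℝ E] {f : ℝ × ℝ → E}
    (hf : Periodic2 f) : Periodic2 (fderiv ℝ f) := by
  intro x
  constructor
  · have h : (fun y => f (y + ((1 : ℝ), (0 : ℝ)))) = f := by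
      funext y
      have := (hf y).1
      rwa [show y + ((1 : ℝ), (0 : ℝ)) = (y.1 + 1, y.2) by ext <;> simp]
    have h2 := fderiv_comp_add_right (𝕜 := ℝ) (f := f) (x := x) ((1 : ℝ), (0 : ℝ))
    rw [h] at h2
    rw [h2, show x + ((1 : ℝ), (0 : ℝ)) = (x.1 + 1, x.2) by ext <;> simp]
  · have h : (fun y => f (y + ((0 : ℝ), (1 : ℝ)))) = f := by
      funext y
      have := (hf y).2
      rwa [show y + ((0 : ℝ), (1 : ℝ)) = (y.1, y.2 + 1) by ext <;> simp]
    have h2 := fderiv_comp_add_right (𝕜 := ℝ) (f := f) (x := x) ((0 : ℝ), (1 : ℝ))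
    rw [h] at h2
    rw [h2, show x + ((0 : ℝ), (1 : ℝ)) = (x.1, x.2 + 1) by ext <;> simp]

lemma pd1_periodic {E : Type*} [NormedAddCommGroup E] [NormedSpace ℝ E] {f : ℝ × ℝ → E}
    (hf : Periodic2 f) : Periodic2 (pd1 f) := fun x => by
  simp only [pd1, (fderiv_periodic hf x).1, (fderiv_periodic hf x).2, and_self]

lemma pd2_periodic {E : Type*} [NormedAddCommGroup E] [NormedSpace ℝ E] {f : ℝ × ℝ → E}
    (hf : Periodic2 f) : Periodic2 (pd2 f) := fun x => by
  simp only [pd2, (fderiv_periodic hf x).1, (fderiv_periodic hf x).2, and_self]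

lemma periodic_fract {E : Type*} {f : ℝ × ℝ → E} (hf : Periodic2 f) (x : ℝ × ℝ) :
    f x = f (Int.fract x.1, Int.fract x.2) := by
  have h1 : ∀ y, Function.Periodic (fun s => f (s, y)) 1 := fun y s => (hf (s, y)).1
  have h2 : ∀ s, Function.Periodic (fun y => f (s, y)) 1 := fun s y => (hf (s, y)).2
  have e1 := (h1 x.2).sub_int_mul_eq (x := x.1) ⌊x.1⌋
  have e2 := (h2 (Int.fract x.1)).sub_int_mul_eq (x := x.2) ⌊x.2⌋
  simp only [mul_one, Int.self_sub_floor] at e1 e2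
  rw [e2, e1]

lemma square_eq : Set.Icc (0:ℝ) 1 ×ˢ Set.Icc (0:ℝ) 1 = Set.Icc ((0:ℝ), (0:ℝ)) ((1:ℝ), (1:ℝ)) := by
  rw [Set.Icc_prod_eq]

lemma integral_curl {G1 G2 : ℝ × ℝ → ℝ} (h1 : ContDiff ℝ (⊤ : ℕ∞) G1)
    (h2 : ContDiff ℝ (⊤ : ℕ∞) G2) (p1 : Periodic2 G1) (p2 : Periodic2 G2) :
    ∫ x in Set.Icc (0:ℝ) 1 ×ˢ Set.Icc (0:ℝ) 1, (pd1 G2 x - pd2 G1 x) = 0 := by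
  rw [square_eq]
  have d1 : Differentiable ℝ G1 := h1.differentiable (by simp)
  have d2 : Differentiable ℝ G2 := h2.differentiable (by simp)
  have hc : Continuous (fun x => pd1 G2 x - pd2 G1 x) :=
    (pd1_contDiff h2).continuous.sub (pd2_contDiff h1).continuous
  have key := integral_divergence_prod_Icc_of_hasFDerivAt_of_le G2 (fun x => - G1 x)
    (fderiv ℝ G2) (fun x => - fderiv ℝ G1 x) ((0:ℝ), (0:ℝ)) ((1:ℝ), (1:ℝ))
    (by constructor <;> simp) h2.continuous.continuousOn h1.continuous.neg.continuousOn
    (fun x _ => (d2 x).hasFDerivAt) (fun x _ => (d1 x).hasFDerivAt.neg)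
    (by
      have : IntegrableOn (fun x => pd1 G2 x - pd2 G1 x)
        (Set.Icc ((0:ℝ), (0:ℝ)) ((1:ℝ), (1:ℝ))) := hc.continuousOn.integrableOn_compact isCompact_Icc
      simpa [pd1, pd2, sub_eq_add_neg] using this)
  have e1 : ∀ x : ℝ, G1 (x, 1) = G1 (x, 0) := fun x => by simpa using (p1 (x, 0)).2
  have e2 : ∀ x : ℝ, G2 (1, x) = G2 (0, x) := fun x => by simpa using (p2 (0, x)).1
  simp only [e1, e2] at key
  simpa [pd1, pd2, sub_eq_add_neg] using key

lemma pd_comm {f : ℝ × ℝ → ℝ} (hf : ContDiff ℝ (⊤ : ℕ∞) f) (x : ℝ × ℝ) :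
    pd1 (pd2 f) x = pd2 (pd1 f) x := by
  have hd : DifferentiableAt ℝ (fderiv ℝ f) x :=
    (hf.fderiv_right (m := (⊤ : ℕ∞)) (by simp)).differentiable (by simp) x
  have hs : IsSymmSndFDerivAt ℝ f x := hf.contDiffAt.isSymmSndFDerivAt (by
    rw [minSmoothness_of_isRCLikeNormedField]; exact WithTop.coe_le_coe.2 (le_top : (2 : ℕ∞) ≤ ⊤))
  have := hs (1, 0) (0, 1)
  unfold pd1 pd2
  rw [fderiv_clm_apply hd (differentiableAt_const _), fderiv_clm_apply hd (differentiableAt_const _)]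
  simpa using this

lemma pd1_re {u : ℝ × ℝ → ℂ} (hu : Differentiable ℝ u) (x : ℝ × ℝ) :
    pd1 (fun y => (u y).re) x = (pd1 u x).re := by
  have := (reCLM.hasFDerivAt.comp x (hu x).hasFDerivAt).fderiv
  simp only [pd1]
  change fderiv ℝ (reCLM ∘ u) x _ = _
  rw [this]; simp

lemma pd1_im {u : ℝ × ℝ → ℂ} (hu : Differentiable ℝ u) (x : ℝ × ℝ) :
    pd1 (fun y => (u y).im) x = (pd1 u x).im := by
  have := (imCLM.hasFDerivAt.comp x (hu x).hasFDerivAt).fderiv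
  simp only [pd1]
  change fderiv ℝ (imCLM ∘ u) x _ = _
  rw [this]; simp

lemma pd2_re {u : ℝ × ℝ → ℂ} (hu : Differentiable ℝ u) (x : ℝ × ℝ) :
    pd2 (fun y => (u y).re) x = (pd2 u x).re := by
  have := (reCLM.hasFDerivAt.comp x (hu x).hasFDerivAt).fderiv
  simp only [pd2]
  change fderiv ℝ (reCLM ∘ u) x _ = _
  rw [this]; simp

lemma pd2_im {u : ℝ × ℝ → ℂ} (hu : Differentiable ℝ u) (x : ℝ × ℝ) :
    pd2 (fun y => (u y).im) x = (pd2 u x).im := by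
  have := (imCLM.hasFDerivAt.comp x (hu x).hasFDerivAt).fderiv
  simp only [pd2]
  change fderiv ℝ (imCLM ∘ u) x _ = _
  rw [this]; simp

/-- the potential `A + j` -/
def gpot (A p q dp dq : ℝ × ℝ → ℝ) (x : ℝ × ℝ) : ℝ :=
  A x * (1 - p x * p x - q x * q x) + p x * dq x - q x * dp x

lemma gpot_fderiv {A p q dp dq : ℝ × ℝ → ℝ} (hA : Differentiable ℝ A) (hp : Differentiable ℝ p)
    (hq : Differentiable ℝ q) (hdp : Differentiable ℝ dp) (hdq : Differentiable ℝ dq)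
    (x e : ℝ × ℝ) :
    fderiv ℝ (gpot A p q dp dq) x e =
      fderiv ℝ A x e * (1 - p x * p x - q x * q x)
      - A x * (2 * p x * fderiv ℝ p x e + 2 * q x * fderiv ℝ q x e)
      + fderiv ℝ p x e * dq x + p x * fderiv ℝ dq x e
      - fderiv ℝ q x e * dp x - q x * fderiv ℝ dp x e := by
  have a := (hA x).hasFDerivAt
  have b := (hp x).hasFDerivAt
  have c := (hq x).hasFDerivAt
  have d := (hdp x).hasFDerivAt
  have f := (hdq x).hasFDerivAt
  have := (((a.mul (((hasFDerivAt_const (1:ℝ) x).sub (b.mul b)).sub (c.mul c))).add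
    (b.mul f)).sub (c.mul d)).fderiv
  change fderiv ℝ (gpot A p q dp dq) x = _ at this
  rw [this]
  simp
  ring

lemma gpot_contDiff {A p q dp dq : ℝ × ℝ → ℝ} (hA : ContDiff ℝ (⊤ : ℕ∞) A)
    (hp : ContDiff ℝ (⊤ : ℕ∞) p) (hq : ContDiff ℝ (⊤ : ℕ∞) q) (hdp : ContDiff ℝ (⊤ : ℕ∞) dp)
    (hdq : ContDiff ℝ (⊤ : ℕ∞) dq) : ContDiff ℝ (⊤ : ℕ∞) (gpot A p q dp dq) := by
  unfold gpot
  fun_prop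

lemma gpot_periodic {A p q dp dq : ℝ × ℝ → ℝ} (hA : Periodic2 A)
    (hp : Periodic2 p) (hq : Periodic2 q) (hdp : Periodic2 dp)
    (hdq : Periodic2 dq) : Periodic2 (gpot A p q dp dq) := fun x => by
  simp only [gpot, (hA x).1, (hA x).2, (hp x).1, (hp x).2, (hq x).1, (hq x).2, (hdp x).1,
    (hdp x).2, (hdq x).1, (hdq x).2, and_self]

/-- energy density -/
def edens (ε : ℝ) (u : ℝ × ℝ → ℂ) (A1 A2 : ℝ × ℝ → ℝ) (x : ℝ × ℝ) : ℝ :=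
  ε ^ 2 * curv A1 A2 x ^ 2 + ‖D1 A1 u x‖ ^ 2 + ‖D2 A2 u x‖ ^ 2
      + (1 - ‖u x‖ ^ 2) ^ 2 / (4 * ε ^ 2)

lemma edens_nonneg (ε : ℝ) (u : ℝ × ℝ → ℂ) (A1 A2 : ℝ × ℝ → ℝ) (x : ℝ × ℝ) :
    0 ≤ edens ε u A1 A2 x := by
  unfold edens; positivity

lemma energy_nonneg (ε : ℝ) (u : ℝ × ℝ → ℂ) (A1 A2 : ℝ × ℝ → ℝ) : 0 ≤ energy ε u A1 A2 :=
  integral_nonneg (fun x => edens_nonneg ε u A1 A2 x)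

lemma edens_continuous (ε : ℝ) {u : ℝ × ℝ → ℂ} {A1 A2 : ℝ × ℝ → ℝ}
    (hu : ContDiff ℝ (⊤ : ℕ∞) u) (hA1 : ContDiff ℝ (⊤ : ℕ∞) A1) (hA2 : ContDiff ℝ (⊤ : ℕ∞) A2) :
    Continuous (edens ε u A1 A2) := by
  have a := (pd1_contDiff hu).continuous
  have b := (pd2_contDiff hu).continuous
  have c := (pd1_contDiff hA2).continuous
  have d := (pd2_contDiff hA1).continuous
  have := hu.continuous
  have := hA1.continuous
  have := hA2.continuous
  unfold edens D1 D2 curv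
  fun_prop

lemma edens_periodic (ε : ℝ) {u : ℝ × ℝ → ℂ} {A1 A2 : ℝ × ℝ → ℝ}
    (hu : Periodic2 u) (hA1 : Periodic2 A1) (hA2 : Periodic2 A2) :
    Periodic2 (edens ε u A1 A2) := fun x => by
  have a := pd1_periodic hu x
  have b := pd2_periodic hu x
  have c := pd1_periodic hA2 x
  have d := pd2_periodic hA1 x
  simp only [edens, D1, D2, curv, (hu x).1, (hu x).2, (hA1 x).1, (hA1 x).2, (hA2 x).1, (hA2 x).2,
    a.1, a.2, b.1, b.2, c.1, c.2, d.1, d.2, and_self]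

lemma energy_eq_zero (ε : ℝ) (hε : 0 < ε) {u : ℝ × ℝ → ℂ} {A1 A2 : ℝ × ℝ → ℝ}
    (hu : ContDiff ℝ (⊤ : ℕ∞) u) (hup : Periodic2 u)
    (hA1 : ContDiff ℝ (⊤ : ℕ∞) A1) (hA1p : Periodic2 A1)
    (hA2 : ContDiff ℝ (⊤ : ℕ∞) A2) (hA2p : Periodic2 A2)
    (hvortex :
      (∀ x, sigP u A1 A2 x = 0 ∧ curv A1 A2 x = hfun ε u x) ∨
      (∀ x, sigM u A1 A2 x = 0 ∧ curv A1 A2 x = -hfun ε u x)) :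
    energy ε u A1 A2 = 0 := by
  have hp : ContDiff ℝ (⊤ : ℕ∞) (fun y => (u y).re) := reCLM.contDiff.comp hu
  have hq : ContDiff ℝ (⊤ : ℕ∞) (fun y => (u y).im) := imCLM.contDiff.comp hu
  have hpp : Periodic2 (fun y => (u y).re) := fun x => by simp only [(hup x).1, (hup x).2, and_self]
  have hqp : Periodic2 (fun y => (u y).im) := fun x => by simp only [(hup x).1, (hup x).2, and_self]
  have hud : Differentiable ℝ u := hu.differentiable (by simp)
  have hre1 := pd1_re hud
  have hre2 := pd2_re hud
  have him1 := pd1_im hud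
  have him2 := pd2_im hud
  generalize hP : (fun y => (u y).re) = p at *
  generalize hQ : (fun y => (u y).im) = q at *
  have hpx : ∀ x, (u x).re = p x := fun x => by rw [← hP]
  have hqx : ∀ x, (u x).im = q x := fun x => by rw [← hQ]
  have key := integral_curl
    (gpot_contDiff hA1 hp hq (pd1_contDiff hp) (pd1_contDiff hq))
    (gpot_contDiff hA2 hp hq (pd2_contDiff hp) (pd2_contDiff hq))
    (gpot_periodic hA1p hpp hqp (pd1_periodic hpp) (pd1_periodic hqp))
    (gpot_periodic hA2p hpp hqp (pd2_periodic hpp) (pd2_periodic hqp))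
  have curl : ∀ x, pd1 (gpot A2 p q (pd2 p) (pd2 q)) x - pd2 (gpot A1 p q (pd1 p) (pd1 q)) x =
      curv A1 A2 x * (1 - p x * p x - q x * q x)
      - A2 x * (2 * p x * pd1 p x + 2 * q x * pd1 q x)
      + A1 x * (2 * p x * pd2 p x + 2 * q x * pd2 q x)
      + 2 * (pd1 p x * pd2 q x - pd1 q x * pd2 p x) := by
    intro x
    have top : ((⊤ : ℕ∞) : WithTop ℕ∞) ≠ 0 := by simp
    have c1 := pd_comm hp x
    have c2 := pd_comm hq x
    have g2 := gpot_fderiv (hA2.differentiable top) (hp.differentiable top) (hq.differentiable top)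
      ((pd2_contDiff hp).differentiable top) ((pd2_contDiff hq).differentiable top) x (1, 0)
    have g1 := gpot_fderiv (hA1.differentiable top) (hp.differentiable top) (hq.differentiable top)
      ((pd1_contDiff hp).differentiable top) ((pd1_contDiff hq).differentiable top) x (0, 1)
    simp only [← pd1.eq_def, ← pd2.eq_def] at g1 g2
    rw [g1, g2, curv]
    linear_combination p x * c2 - q x * c1
  have hε2 : ε ≠ 0 := hε.ne'
  unfold energy
  rcases hvortex with hv | hv
  · refine Eq.trans ?_ key
    congr 1
    funext x
    rw [curl x]
    obtain ⟨s, hF⟩ := hv x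
    have s1 := congrArg Complex.re s
    have s2 := congrArg Complex.im s
    simp only [hfun] at hF
    simp only [← normSq_eq_norm_sq, normSq_apply] at hF ⊢
    simp [sigP, D1, D2, ← hre1, ← hre2, ← him1, ← him2, hpx, hqx] at s1 s2 hF ⊢
    have hF2 : (1 - (p x * p x + q x * q x)) = 2 * ε ^ 2 * curv A1 A2 x := by
      rw [hF]; field_simp
    have hW : (1 - (p x * p x + q x * q x)) ^ 2 / (4 * ε ^ 2) = ε ^ 2 * curv A1 A2 x ^ 2 := by
      rw [hF2]; field_simp; ring
    linear_combination (((pd1 p x + A1 x * q x) - (pd2 q x - A2 x * p x)) * s1 +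
      ((pd1 q x - A1 x * p x) + (pd2 p x + A2 x * q x)) * s2 + hW) - curv A1 A2 x * hF2
  · rw [← neg_eq_zero, ← integral_neg]
    refine Eq.trans ?_ key
    congr 1
    funext x
    rw [curl x]
    obtain ⟨s, hF⟩ := hv x
    have s1 := congrArg Complex.re s
    have s2 := congrArg Complex.im s
    simp only [hfun] at hF
    simp only [← normSq_eq_norm_sq, normSq_apply] at hF ⊢
    simp [sigM, D1, D2, ← hre1, ← hre2, ← him1, ← him2, hpx, hqx] at s1 s2 hF ⊢
    have hF2 : (1 - (p x * p x + q x * q x)) = - (2 * ε ^ 2 * curv A1 A2 x) := by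
      rw [hF]; field_simp
    have hW : (1 - (p x * p x + q x * q x)) ^ 2 / (4 * ε ^ 2) = ε ^ 2 * curv A1 A2 x ^ 2 := by
      rw [hF2]; field_simp; ring
    linear_combination -(((pd1 p x + A1 x * q x) + (pd2 q x - A2 x * p x)) * s1 +
      ((pd1 q x - A1 x * p x) - (pd2 p x + A2 x * q x)) * s2 + hW) - curv A1 A2 x * hF2

lemma second_deriv_nonneg {f : ℝ → ℝ} (hc : ContinuousAt f 0) (h : ∀ t, f 0 ≤ f t) :
    0 ≤ iteratedDeriv 2 f 0 := by
  have e : iteratedDeriv 2 f 0 = deriv (deriv f) 0 := by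
    simp [iteratedDeriv_succ]
  rw [e]
  by_contra! hneg
  have hd : deriv f 0 = 0 := IsLocalMin.deriv_eq_zero (Filter.Eventually.of_forall h)
  have hmax := isLocalMax_of_deriv_deriv_neg hneg hd hc
  have hEq : f =ᶠ[nhds 0] fun _ => f 0 := by
    filter_upwards [hmax] with t ht
    exact le_antisymm ht (h t)
  have := hEq.deriv.deriv_eq
  simp at this
  linarith

lemma energy_path_continuous (ε : ℝ) {u v : ℝ × ℝ → ℂ} {A1 A2 a1 a2 : ℝ × ℝ → ℝ}
    (hu : ContDiff ℝ (⊤ : ℕ∞) u) (hA1 : ContDiff ℝ (⊤ : ℕ∞) A1) (hA2 : ContDiff ℝ (⊤ : ℕ∞) A2)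
    (hv : ContDiff ℝ (⊤ : ℕ∞) v) (ha1 : ContDiff ℝ (⊤ : ℕ∞) a1) (ha2 : ContDiff ℝ (⊤ : ℕ∞) a2) :
    Continuous (fun t : ℝ => energy ε (fun x => u x + t • v x)
        (fun x => A1 x + t * a1 x) (fun x => A2 x + t * a2 x)) := by
  have top : ((⊤ : ℕ∞) : WithTop ℕ∞) ≠ 0 := by simp
  have lin : ∀ {E : Type} [NormedAddCommGroup E] [NormedSpace ℝ E] {f g : ℝ × ℝ → E}
      (_ : Differentiable ℝ f) (_ : Differentiable ℝ g) (t : ℝ) (x : ℝ × ℝ),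
      fderiv ℝ (fun y => f y + t • g y) x = fderiv ℝ f x + t • fderiv ℝ g x := by
    intro E _ _ f g hf hg t x
    exact ((hf x).hasFDerivAt.add ((hg x).hasFDerivAt.const_smul t)).fderiv
  have l1 := lin (hu.differentiable top) (hv.differentiable top)
  have l2 := lin (hA1.differentiable top) (ha1.differentiable top)
  have l3 := lin (hA2.differentiable top) (ha2.differentiable top)
  simp only [smul_eq_mul] at l2 l3
  unfold energy
  refine continuous_parametric_integral_of_continuous ?_ (isCompact_Icc.prod isCompact_Icc)
  have c1 := (pd1_contDiff hu).continuous
  have c2 := (pd2_contDiff hu).continuous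
  have c3 := (pd1_contDiff hv).continuous
  have c4 := (pd2_contDiff hv).continuous
  have c5 := (pd2_contDiff hA1).continuous
  have c6 := (pd1_contDiff hA2).continuous
  have c7 := (pd2_contDiff ha1).continuous
  have c8 := (pd1_contDiff ha2).continuous
  have := hu.continuous
  have := hA1.continuous
  have := hA2.continuous
  have := hv.continuous
  have := ha1.continuous
  have := ha2.continuous
  have m1 : ∀ (t : ℝ) x, pd1 (fun y => u y + t • v y) x = pd1 u x + t • pd1 v x := fun t x => by
    simp only [pd1, l1]; rfl
  have m2 : ∀ (t : ℝ) x, pd2 (fun y => u y + t • v y) x = pd2 u x + t • pd2 v x := fun t x => by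
    simp only [pd2, l1]; rfl
  have m3 : ∀ (t : ℝ) x, pd2 (fun y => A1 y + t * a1 y) x = pd2 A1 x + t * pd2 a1 x := by simp [pd2, l2]
  have m4 : ∀ (t : ℝ) x, pd1 (fun y => A2 y + t * a2 y) x = pd1 A2 x + t * pd1 a2 x := by simp [pd1, l3]
  simp only [Function.uncurry_def, D1, D2, curv, m1, m2, m3, m4]
  fun_prop

/-- Vortex (or anti-vortex) solutions solve the Yang--Mills--Higgs equations, have zero
energy, minimize the energy among all periodic configurations, and are stable. -/
theorem vortex_solutions_minimize_and_are_stable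
    (ε : ℝ) (hε : 0 < ε) (u : ℝ × ℝ → ℂ) (A1 A2 : ℝ × ℝ → ℝ)
    (hu : ContDiff ℝ (⊤ : ℕ∞) u) (hup : Periodic2 u)
    (hA1 : ContDiff ℝ (⊤ : ℕ∞) A1) (hA1p : Periodic2 A1)
    (hA2 : ContDiff ℝ (⊤ : ℕ∞) A2) (hA2p : Periodic2 A2)
    (hvortex :
      (∀ x, sigP u A1 A2 x = 0 ∧ curv A1 A2 x = hfun ε u x) ∨
      (∀ x, sigM u A1 A2 x = 0 ∧ curv A1 A2 x = -hfun ε u x)) :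
    IsYMH ε u A1 A2 ∧
    energy ε u A1 A2 = 0 ∧
    (∀ w : ℝ × ℝ → ℂ, ∀ B1 B2 : ℝ × ℝ → ℝ,
      ContDiff ℝ (⊤ : ℕ∞) w → Periodic2 w → ContDiff ℝ (⊤ : ℕ∞) B1 → Periodic2 B1 →
      ContDiff ℝ (⊤ : ℕ∞) B2 → Periodic2 B2 →
      energy ε u A1 A2 ≤ energy ε w B1 B2) ∧
    Stable ε u A1 A2 := by
  have hE := energy_eq_zero ε hε hu hup hA1 hA1p hA2 hA2p hvortex
  have hmin : ∀ w B1 B2, energy ε u A1 A2 ≤ energy ε w B1 B2 := fun w B1 B2 => by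
    rw [hE]; exact energy_nonneg ε w B1 B2
  have hcont := edens_continuous ε hu hA1 hA2
  have hsq : Set.EqOn (edens ε u A1 A2) 0 (Set.Icc ((0:ℝ), (0:ℝ)) ((1:ℝ), (1:ℝ))) := by
    have h0 : ∫ x in Set.Icc ((0:ℝ), (0:ℝ)) ((1:ℝ), (1:ℝ)), edens ε u A1 A2 x = 0 := by
      rw [← square_eq]; exact hE
    rw [setIntegral_eq_zero_iff_of_nonneg_ae
      (Filter.Eventually.of_forall (edens_nonneg ε u A1 A2))
      (hcont.continuousOn.integrableOn_compact isCompact_Icc)] at h0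
    refine Measure.eqOn_of_ae_eq h0 hcont.continuousOn continuousOn_const ?_
    rw [← square_eq, interior_prod_eq, closure_prod_eq, interior_Icc, closure_Ioo (by norm_num)]
  have hz : ∀ x, edens ε u A1 A2 x = 0 := by
    intro x
    rw [periodic_fract (edens_periodic ε hup hA1p hA2p) x]
    apply hsq
    rw [← square_eq]
    exact ⟨⟨Int.fract_nonneg _, (Int.fract_lt_one _).le⟩, ⟨Int.fract_nonneg _, (Int.fract_lt_one _).le⟩⟩
  have hall : ∀ x, curv A1 A2 x = 0 ∧ D1 A1 u x = 0 ∧ D2 A2 u x = 0 ∧ hfun ε u x = 0 := by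
    intro x
    have h := hz x
    unfold edens at h
    have n1 : 0 ≤ ε ^ 2 * curv A1 A2 x ^ 2 := by positivity
    have n2 : 0 ≤ ‖D1 A1 u x‖ ^ 2 := by positivity
    have n3 : 0 ≤ ‖D2 A2 u x‖ ^ 2 := by positivity
    have n4 : 0 ≤ (1 - ‖u x‖ ^ 2) ^ 2 / (4 * ε ^ 2) := by positivity
    have z1 : ε ^ 2 * curv A1 A2 x ^ 2 = 0 := by linarith
    have z2 : ‖D1 A1 u x‖ ^ 2 = 0 := by linarith
    have z3 : ‖D2 A2 u x‖ ^ 2 = 0 := by linarith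
    have z4 : (1 - ‖u x‖ ^ 2) ^ 2 / (4 * ε ^ 2) = 0 := by linarith
    refine ⟨by simpa [hε.ne'] using z1, by simpa using z2, by simpa using z3, ?_⟩
    have : (1 - ‖u x‖ ^ 2) = 0 := by simpa [hε.ne'] using z4
    simp [hfun, this]
  have f1 : curv A1 A2 = fun _ => 0 := funext fun x => (hall x).1
  have f2 : D1 A1 u = fun _ => 0 := funext fun x => (hall x).2.1
  have f3 : D2 A2 u = fun _ => 0 := funext fun x => (hall x).2.2.1
  refine ⟨⟨?_, ?_, ?_⟩, hE, fun w B1 B2 _ _ _ _ _ _ => hmin w B1 B2, ?_⟩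
  · intro x
    rw [f2, f3, (hall x).2.2.2]
    simp [D1, D2, pd1, pd2]
  · intro x
    rw [f1, f2]
    simp [pd2]
  · intro x
    rw [f1, f3]
    simp [pd1]
  · intro v a1 a2 hv _ ha1 _ ha2 _
    refine second_deriv_nonneg (energy_path_continuous ε hu hA1 hA2 hv ha1 ha2).continuousAt ?_
    intro t
    simp only [zero_smul, zero_mul, add_zero]
    exact hmin _ _ _
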